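/- For every k ≥ 1, AR_s(M_k) = k(k+1)/2, where M_k denotes a matching with k edges (k pairwise disjoint edges). -/

import Mathlib

open SimpleGraph

/-- A proper edge coloring of `G`: adjacent (distinct, vertex-sharing) edges get
different colors. -/
def IsProperEdgeColoring {V : Type*} (G : SimpleGraph V) (c : Sym2 V → ℕ) : Prop :=
  ∀ e₁ ∈ G.edgeSet, ∀ e₂ ∈ G.edgeSet, e₁ ≠ e₂ → (∃ v, v ∈ e₁ ∧ v ∈ e₂) → c e₁ ≠ c e₂

/-- `G` contains a rainbow copy of `H` with respect to the edge coloring `c`: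
there is an injective graph homomorphism `H → G` whose image edges receive
pairwise distinct colors. -/
def HasRainbowCopy {V W : Type*} (G : SimpleGraph V) (H : SimpleGraph W) (c : Sym2 V → ℕ) : Prop :=
  ∃ f : H →g G, Function.Injective f ∧
    ∀ e₁ ∈ H.edgeSet, ∀ e₂ ∈ H.edgeSet, c (Sym2.map f e₁) = c (Sym2.map f e₂) → e₁ = e₂

/-- `G → H`: every proper edge coloring of `G` contains a rainbow copy of `H`. -/
def ArrowsTo {V W : Type*} (G : SimpleGraph V) (H : SimpleGraph W) : Prop :=
  ∀ c : Sym2 V → ℕ, IsProperEdgeColoring G c → HasRainbowCopy G H c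

/-- The size anti-Ramsey number: the minimum number of edges of a (finite) graph
`G` with `G → H`. -/
noncomputable def ARs {W : Type*} (H : SimpleGraph W) : ℕ :=
  sInf {m | ∃ (n : ℕ) (G : SimpleGraph (Fin n)), ArrowsTo G H ∧ G.edgeSet.ncard = m}

/-- The local anti-Ramsey number: the minimum `n` such that `K_n → H`. -/
noncomputable def ARloc {W : Type*} (H : SimpleGraph W) : ℕ :=
  sInf {n | ArrowsTo (⊤ : SimpleGraph (Fin n)) H}

/-- The matching `M_k` with `k` pairwise disjoint edges, on vertex set `Fin (2k)`:
vertices `2i` and `2i+1` are matched. -/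
def matchingGraph (k : ℕ) : SimpleGraph (Fin (2 * k)) :=
  SimpleGraph.fromRel (fun v w => v.val / 2 = w.val / 2)

/-!
For the lower bound, induct on `k`, starting from a graph with fewer than `k (k + 1) / 2` edges. If
it has no `k`-matching, any proper coloring will do. Otherwise remove a `k`-matching: the remaining
graph has fewer than `(k - 1) k / 2` edges, hence a proper coloring without a rainbow
`(k - 1)`-matching, and giving the removed edges one fresh color adds at most one edge to any
rainbow matching.

The disjoint union of stars with `1, 2, …, k` edges attains the bound: in a proper coloring the
`i`-th star shows `i` colors, so by Hall's theorem distinct colors can be chosen, one in each star,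
and edges of different stars are disjoint.
-/

lemma exists_injective_mem_of_lt_card {k : ℕ} {α : Type*} (t : Fin k → Finset α)
    (ht : ∀ i, i < (t i).card) : ∃ f : Fin k → α, Function.Injective f ∧ ∀ i, f i ∈ t i := by
  classical
  refine (Finset.all_card_le_biUnion_card_iff_exists_injective t).1 fun s => ?_
  obtain rfl | hs := s.eq_empty_or_nonempty
  · simp
  · calc s.card ≤ (Finset.Iic (s.max' hs)).card := Finset.card_le_card fun x hx => by
          simpa using s.le_max' x hx
      _ ≤ (t (s.max' hs)).card := by simpa using ht (s.max' hs)
      _ ≤ (s.biUnion t).card :=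
          Finset.card_le_card (Finset.subset_biUnion_of_mem t (s.max'_mem hs))

variable {V V' W : Type*} {G : SimpleGraph V} {G' : SimpleGraph V'} {H : SimpleGraph W}
  {c : Sym2 V → ℕ} {M : Set (Sym2 V)} {k : ℕ}

section Containment

lemma IsProperEdgeColoring.comap {c : Sym2 V' → ℕ} (hc : IsProperEdgeColoring G' c)
    (f : Copy G G') : IsProperEdgeColoring G (c ∘ Sym2.map f) := by
  rintro e₁ h₁ e₂ h₂ hne ⟨v, hv₁, hv₂⟩
  exact hc _ (f.mapEdgeSet ⟨e₁, h₁⟩).2 _ (f.mapEdgeSet ⟨e₂, h₂⟩).2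
    ((Sym2.map.injective f.injective).ne hne)
    ⟨f v, Sym2.mem_map.2 ⟨v, hv₁, rfl⟩, Sym2.mem_map.2 ⟨v, hv₂, rfl⟩⟩

lemma ArrowsTo.of_isContained (hG : ArrowsTo G H) (h : G ⊑ G') : ArrowsTo G' H := by
  obtain ⟨φ⟩ := h
  intro c hc
  obtain ⟨f, hf, hrainbow⟩ := hG _ (hc.comap φ)
  refine ⟨φ.toHom.comp f, φ.injective.comp hf, fun e₁ h₁ e₂ h₂ he => hrainbow e₁ h₁ e₂ h₂ ?_⟩
  simpa [Sym2.map_map] using he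

lemma ARs_eq_ncard_edgeSet [Finite V] (hG : ArrowsTo G H)
    (hmin : ∀ (n : ℕ) (F : SimpleGraph (Fin n)), ArrowsTo F H →
      G.edgeSet.ncard ≤ F.edgeSet.ncard) :
    ARs H = G.edgeSet.ncard := by
  cases nonempty_fintype V
  let φ := G.overFinIso rfl
  refine IsLeast.csInf_eq ⟨⟨_, _, hG.of_isContained ⟨φ.toCopy⟩, ?_⟩, ?_⟩
  · exact (Nat.card_congr φ.mapEdgeSet).symm
  · rintro _ ⟨n, F, hF, rfl⟩
    exact hmin n F hF

end Containment

section RainbowMatching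

/-- `M` is a matching of `G`, given by its set of edges rather than as a subgraph. -/
structure IsEdgeMatching (G : SimpleGraph V) (M : Set (Sym2 V)) : Prop where
  subset_edgeSet : M ⊆ G.edgeSet
  pairwiseDisjoint : M.PairwiseDisjoint ((↑) : Sym2 V → Set V)

/-- `G` has a matching of `k` edges whose colors under `c` are distinct. This is the edge-set form
of a rainbow copy of `matchingGraph k`; see `hasRainbowCopy_matchingGraph_iff`. -/
def HasRainbowMatching (G : SimpleGraph V) (k : ℕ) (c : Sym2 V → ℕ) : Prop :=
  ∃ M : Finset (Sym2 V), IsEdgeMatching G M ∧ M.card = k ∧ Set.InjOn c M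

lemma HasRainbowMatching.of_family (e : Fin k → Sym2 V) (he : ∀ i, e i ∈ G.edgeSet)
    (hdisj : Pairwise fun i j => Disjoint (e i : Set V) (e j)) (hc : Function.Injective (c ∘ e)) :
    HasRainbowMatching G k c := by
  refine ⟨Finset.univ.map ⟨e, hc.of_comp⟩, ⟨?_, ?_⟩, by simp, ?_⟩
  · simpa [Set.range_subset_iff] using he
  · have hrange : (Set.range e).PairwiseDisjoint ((↑) : Sym2 V → Set V) :=
      Pairwise.range_pairwise hdisj
    simpa using hrange
  · simpa [← Set.image_univ] using hc.injOn.image_of_comp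

/-- The `i`-th edge of `matchingGraph k`. -/
def matchingEdge (i : Fin k) : Sym2 (Fin (2 * k)) :=
  s(⟨2 * i, by omega⟩, ⟨2 * i + 1, by omega⟩)

lemma mem_matchingEdge_iff {i : Fin k} {v : Fin (2 * k)} : v ∈ matchingEdge i ↔ v.val / 2 = i := by
  simp only [matchingEdge, Sym2.mem_iff, Fin.ext_iff]
  omega

lemma disjoint_matchingEdge {i j : Fin k} (hij : i ≠ j) :
    Disjoint (matchingEdge i : Set (Fin (2 * k))) (matchingEdge j) := by
  simp only [Set.disjoint_left, SetLike.mem_coe, mem_matchingEdge_iff]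
  omega

lemma matchingEdge_injective : Function.Injective (matchingEdge (k := k)) := by
  intro i j h
  simp only [matchingEdge, Sym2.eq_iff, Fin.ext_iff] at h ⊢
  omega

lemma edgeSet_matchingGraph (k : ℕ) : (matchingGraph k).edgeSet = Set.range matchingEdge := by
  ext e
  induction e with | _ v w
  simp only [mem_edgeSet, matchingGraph, fromRel_adj, Set.mem_range, matchingEdge, Sym2.eq_iff,
    ne_eq, Fin.ext_iff]
  constructor
  · intro h
    exact ⟨⟨v / 2, by omega⟩, by dsimp only; omega⟩
  · rintro ⟨i, hi⟩
    omega

lemma exists_map_matchingEdge_eq (e : Fin k → Sym2 V) :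
    ∃ f : Fin (2 * k) → V, ∀ i, (matchingEdge i).map f = e i := by
  have hends (i : Fin k) : ∃ p : V × V, s(p.1, p.2) = e i := Quot.exists_rep (e i)
  choose p hp using hends
  refine ⟨fun v => if v.val % 2 = 0 then (p ⟨v / 2, by omega⟩).1 else (p ⟨v / 2, by omega⟩).2,
    fun i => ?_⟩
  simp [matchingEdge, ← hp, Nat.add_div]

lemma HasRainbowMatching.of_hasRainbowCopy (h : HasRainbowCopy G (matchingGraph k) c) :
    HasRainbowMatching G k c := by
  obtain ⟨f, hf, hc⟩ := h
  have hmem (i : Fin k) : matchingEdge i ∈ (matchingGraph k).edgeSet := by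
    simp [edgeSet_matchingGraph]
  refine .of_family (fun i => (matchingEdge i).map f) (fun i => (f.mapEdgeSet ⟨_, hmem i⟩).2)
    (fun i j hij => ?_) (fun i j hij => matchingEdge_injective (hc _ (hmem i) _ (hmem j) hij))
  simpa [Sym2.coe_map, Set.disjoint_image_iff hf] using disjoint_matchingEdge hij

lemma HasRainbowMatching.hasRainbowCopy (h : HasRainbowMatching G k c) :
    HasRainbowCopy G (matchingGraph k) c := by
  obtain ⟨M, hM, hcard, hc⟩ := h
  let e := (M.equivFinOfCardEq hcard).symm
  obtain ⟨f, hf⟩ := exists_map_matchingEdge_eq fun i => (e i).val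
  have hadj {v w : Fin (2 * k)} (hvw : (matchingGraph k).Adj v w) : G.Adj (f v) (f w) := by
    rw [← mem_edgeSet, edgeSet_matchingGraph] at hvw
    obtain ⟨i, hi⟩ := hvw
    rw [← mem_edgeSet, ← Sym2.map_mk, ← hi, hf]
    exact hM.subset_edgeSet (e i).2
  refine ⟨⟨f, hadj⟩, fun v w (hvw : f v = f w) => ?_, ?_⟩
  · have hmem (x : Fin (2 * k)) : f x ∈ (e ⟨x / 2, by omega⟩).val := by
      rw [← hf]
      exact Sym2.mem_map.2 ⟨x, mem_matchingEdge_iff.2 rfl, rfl⟩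
    have hedge := hM.pairwiseDisjoint.elim_set (e _).2 (e _).2 (f v) (hmem v) (hvw ▸ hmem w)
    have hdiv : v.val / 2 = w.val / 2 := by simpa using e.injective (Subtype.ext hedge)
    by_contra hne
    exact (hadj ⟨hne, .inl hdiv⟩).ne hvw
  · simp only [edgeSet_matchingGraph]
    rintro _ ⟨i, rfl⟩ _ ⟨j, rfl⟩ hij
    have hcolor : c (e i) = c (e j) := by simpa [hf] using hij
    rw [e.injective (Subtype.ext (hc (e i).2 (e j).2 hcolor))]

lemma hasRainbowCopy_matchingGraph_iff :
    HasRainbowCopy G (matchingGraph k) c ↔ HasRainbowMatching G k c :=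
  ⟨.of_hasRainbowCopy, HasRainbowMatching.hasRainbowCopy⟩

end RainbowMatching

section LowerBound

open Classical in
/-- The coloring that gives the edges of `M` the new color `0`; the shift of `c` by one on the other
edges keeps that color free. It extends a coloring of `G.deleteEdges M` to `G`. -/
noncomputable def freshColoring (M : Set (Sym2 V)) (c : Sym2 V → ℕ) (e : Sym2 V) : ℕ :=
  if e ∈ M then 0 else c e + 1

lemma IsEdgeMatching.isProperEdgeColoring_freshColoring (hM : IsEdgeMatching G M)
    (hc : IsProperEdgeColoring (G.deleteEdges M) c) :
    IsProperEdgeColoring G (freshColoring M c) := by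
  rintro e₁ h₁ e₂ h₂ hne ⟨v, hv₁, hv₂⟩
  rw [IsProperEdgeColoring, edgeSet_deleteEdges] at hc
  by_cases m₁ : e₁ ∈ M <;> by_cases m₂ : e₂ ∈ M
  · exact absurd (hM.pairwiseDisjoint.elim_set m₁ m₂ v hv₁ hv₂) hne
  · simp [freshColoring, m₁, m₂]
  · simp [freshColoring, m₁, m₂]
  · simpa [freshColoring, m₁, m₂] using hc e₁ ⟨h₁, m₁⟩ e₂ ⟨h₂, m₂⟩ hne ⟨v, hv₁, hv₂⟩

lemma HasRainbowMatching.of_freshColoring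
    (h : HasRainbowMatching G (k + 1) (freshColoring M c)) :
    HasRainbowMatching (G.deleteEdges M) k c := by
  classical
  obtain ⟨N, hN, hcard, hinj⟩ := h
  have hcard_inter : (N.filter (· ∈ M)).card ≤ 1 := by
    refine Finset.card_le_one.2 fun e₁ h₁ e₂ h₂ => ?_
    rw [Finset.mem_filter] at h₁ h₂
    exact hinj h₁.1 h₂.1 (by simp [freshColoring, h₁.2, h₂.2])
  have hcard_diff : k ≤ (N.filter (· ∉ M)).card := by
    have := N.card_filter_add_card_filter_not (· ∈ M)
    omega
  obtain ⟨N', hN', hcard'⟩ := Finset.exists_subset_card_eq hcard_diff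
  have hsub : (N' : Set (Sym2 V)) ⊆ N \ M := fun e he => by simpa using hN' he
  refine ⟨N', ⟨?_, hN.pairwiseDisjoint.subset fun e he => (hsub he).1⟩, hcard', ?_⟩
  · rw [edgeSet_deleteEdges]
    exact hsub.trans (Set.sdiff_subset_sdiff_left hN.subset_edgeSet)
  · intro e₁ h₁ e₂ h₂ h
    exact hinj (hsub h₁).1 (hsub h₂).1 (by simp [freshColoring, (hsub h₁).2, (hsub h₂).2, h])

lemma isProperEdgeColoring_of_injOn (hc : Set.InjOn c G.edgeSet) : IsProperEdgeColoring G c :=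
  fun _ h₁ _ h₂ hne _ => hc.ne h₁ h₂ hne

theorem exists_isProperEdgeColoring_not_hasRainbowMatching (hfin : G.edgeSet.Finite)
    (hlt : 2 * G.edgeSet.ncard < k * (k + 1)) :
    ∃ c, IsProperEdgeColoring G c ∧ ¬ HasRainbowMatching G k c := by
  induction k generalizing G with
  | zero => omega
  | succ k ih =>
    by_cases hmatching : ∃ M : Finset (Sym2 V), IsEdgeMatching G M ∧ M.card = k + 1
    · obtain ⟨M, hM, hcard⟩ := hmatching
      have hncard : (G.deleteEdges (M : Set (Sym2 V))).edgeSet.ncard + (k + 1)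
          = G.edgeSet.ncard := by
        rw [edgeSet_deleteEdges, ← hcard, ← Set.ncard_coe_finset M]
        exact Set.ncard_sdiff_add_ncard_of_subset hM.subset_edgeSet hfin
      obtain ⟨c, hc, hno⟩ := ih (G := G.deleteEdges M)
        (hfin.subset (edgeSet_subset_edgeSet.2 (G.deleteEdges_le _))) (by linarith)
      exact ⟨freshColoring M c, hM.isProperEdgeColoring_freshColoring hc,
        fun h => hno h.of_freshColoring⟩
    · obtain ⟨c, hc⟩ := Set.countable_iff_exists_injOn.1 hfin.countable
      exact ⟨c, isProperEdgeColoring_of_injOn hc,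
        fun ⟨M, hM, hcard, _⟩ => hmatching ⟨M, hM, hcard⟩⟩

theorem le_ncard_edgeSet_of_arrowsTo_matchingGraph (hfin : G.edgeSet.Finite)
    (h : ArrowsTo G (matchingGraph k)) :
    k * (k + 1) / 2 ≤ G.edgeSet.ncard := by
  by_contra! hlt
  obtain ⟨c, hc, hno⟩ :=
    exists_isProperEdgeColoring_not_hasRainbowMatching (k := k) hfin (by omega)
  exact hno (hasRainbowCopy_matchingGraph_iff.1 (h c hc))

end LowerBound

section StarForest

variable {ι : Type*} {L : ι → Type*}

/-- The edge joining the center `none` of the `i`-th star to its leaf `some a`. -/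
def starEdge (i : ι) (a : L i) : Sym2 (Σ i, Option (L i)) :=
  s(⟨i, none⟩, ⟨i, some a⟩)

/-- The disjoint union of stars, the `i`-th of which has leaf set `L i`. -/
def starForest (L : ι → Type*) : SimpleGraph (Σ i, Option (L i)) :=
  fromEdgeSet (Set.range fun x : Σ i, L i => starEdge x.1 x.2)

lemma starEdge_injective : Function.Injective fun x : Σ i, L i => starEdge x.1 x.2 := by
  rintro ⟨i, a⟩ ⟨j, b⟩ h
  obtain rfl : i = j := by by_contra hij; simp [starEdge, hij] at h
  simpa [starEdge] using h

lemma disjoint_starEdge {i j : ι} (hij : i ≠ j) (a : L i) (b : L j) :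
    Disjoint (starEdge i a : Set (Σ i, Option (L i))) (starEdge j b) := by
  simp [starEdge, hij.symm]

lemma edgeSet_starForest (L : ι → Type*) :
    (starForest L).edgeSet = Set.range fun x : Σ i, L i => starEdge x.1 x.2 := by
  rw [starForest, edgeSet_fromEdgeSet, sdiff_eq_left, Set.disjoint_left]
  rintro _ ⟨x, rfl⟩
  simp [starEdge]

lemma starEdge_mem_edgeSet (i : ι) (a : L i) : starEdge i a ∈ (starForest L).edgeSet := by
  rw [edgeSet_starForest]
  exact ⟨⟨i, a⟩, rfl⟩

lemma ncard_edgeSet_starForest [Fintype ι] [∀ i, Fintype (L i)] :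
    (starForest L).edgeSet.ncard = ∑ i, Fintype.card (L i) := by
  rw [edgeSet_starForest, Set.ncard_range_of_injective starEdge_injective, Nat.card_eq_fintype_card,
    Fintype.card_sigma]

lemma IsProperEdgeColoring.injective_starEdge {c : Sym2 (Σ i, Option (L i)) → ℕ}
    (hc : IsProperEdgeColoring (starForest L) c) (i : ι) :
    Function.Injective fun a : L i => c (starEdge i a) := by
  intro a b h
  by_contra hne
  refine hc _ (starEdge_mem_edgeSet i a) _ (starEdge_mem_edgeSet i b) ?_
    ⟨⟨i, none⟩, by simp [starEdge], by simp [starEdge]⟩ h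
  simpa [starEdge] using hne

theorem arrowsTo_starForest {L : Fin k → Type*} [∀ i, Fintype (L i)]
    (hL : ∀ i, i < Fintype.card (L i)) : ArrowsTo (starForest L) (matchingGraph k) := by
  intro c hc
  obtain ⟨f, hf, hmem⟩ := exists_injective_mem_of_lt_card
    (fun i => Finset.univ.map ⟨_, hc.injective_starEdge i⟩) (by simpa using hL)
  have hleaf (i : Fin k) : ∃ a : L i, c (starEdge i a) = f i := by simpa using hmem i
  choose a ha using hleaf
  refine hasRainbowCopy_matchingGraph_iff.2 (.of_family (fun i => starEdge i (a i))
    (fun i => starEdge_mem_edgeSet i (a i)) (fun i j hij => disjoint_starEdge hij _ _) ?_)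
  simpa [Function.comp_def, ha] using hf

end StarForest

theorem stmt_9 (k : ℕ) (hk : 1 ≤ k) :
    ARs (matchingGraph k) = k * (k + 1) / 2 := by
  let F := starForest fun i : Fin k => Fin (i + 1)
  have hcard : F.edgeSet.ncard = k * (k + 1) / 2 := by
    have hsum : ∑ i : Fin k, (i.val + 1) = k * (k + 1) / 2 := by
      rw [Fin.sum_univ_eq_sum_range (· + 1)]
      simpa [Finset.sum_range_succ', mul_comm] using Finset.sum_range_id (k + 1)
    simpa [F, ncard_edgeSet_starForest] using hsum
  have harrow : ArrowsTo F (matchingGraph k) := arrowsTo_starForest (by simp)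
  have hmin (n : ℕ) (G : SimpleGraph (Fin n)) (hG : ArrowsTo G (matchingGraph k)) :
      F.edgeSet.ncard ≤ G.edgeSet.ncard :=
    hcard.trans_le (le_ncard_edgeSet_of_arrowsTo_matchingGraph G.edgeSet.toFinite hG)
  rw [ARs_eq_ncard_edgeSet harrow hmin, hcard]
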